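/- Let n, k ≥ 1 with k ≤ n, write x = (x′, x″) ∈ ℝ^k × ℝ^{n−k}, let −k < μ < 0, and let a : ℝⁿ × ℝ^k → ℂ be smooth and satisfy, for every multi-index α, a bound |∂_θ^α a(x,θ)| ≤ C_α ⟨θ⟩^{μ−|α|} for all (x,θ), where ⟨θ⟩ := (1+|θ|²)^{1/2}. Let χ ∈ C_c^∞(ℝ^k) equal 1 on a neighborhood of 0. Then there is a constant C such that for all x with 0 < |x′| ≤ 1 and all ε ∈ (0,1], |∫_{ℝ^k} e^{i x′·θ} a(x,θ) χ(εθ) dθ| ≤ C |x′|^{−k−μ}. -/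

import Mathlib

open MeasureTheory
open scoped RealInnerProductSpace

/-- The Japanese bracket `⟨θ⟩ = (1 + |θ|²)^{1/2}`. -/
noncomputable def jap {k : ℕ} (θ : EuclideanSpace ℝ (Fin k)) : ℝ :=
  Real.sqrt (1 + ‖θ‖ ^ 2)

/-!
Over `|θ| ≤ 1/|ξ|` a symbol of order `μ > -k` is absolutely integrable, with integral of the order
`|ξ|^(-k-μ)`. Over `|θ| ≥ 1/|ξ|` the `N`-th derivative of the symbol is integrable once `N > k + μ`,
with integral of the order `|ξ|^(N-k-μ)`, and `N` integrations by parts gain the factor `|ξ|^(-N)`.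
Both estimates use only the homogeneous bounds `|∂^m f(θ)| ≤ A m |θ|^(μ-m)`. These are invariant
under dilation, so that it suffices to take `|ξ| = 1`; and the cutoffs `χ(ε·)` satisfy them with
order `0` and constants independent of `ε`, which makes the bound uniform in `ε`.
-/

open Function Metric Module
open scoped ContDiff FourierTransform Real

section SymbolCalculus

variable {E F : Type*} [NormedAddCommGroup E] [NormedSpace ℝ E]
  [NormedAddCommGroup F] [NormedSpace ℝ F] {s t : ℝ} {A B : ℕ → ℝ} {f g : E → F}

lemma iteratedFDeriv_comp_smul_apply {c : ℝ} (hc : c ≠ 0) (f : E → F) (m : ℕ) (θ : E) :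
    iteratedFDeriv ℝ m (fun θ ↦ f (c • θ)) θ = c ^ m • iteratedFDeriv ℝ m f (c • θ) := by
  let e : E ≃L[ℝ] E := ContinuousLinearEquiv.smulLeft (Units.mk0 c hc)
  have h := e.iteratedFDerivWithin_comp_right f uniqueDiffOn_univ (Set.mem_univ (e θ)) m
  rw [Set.preimage_univ, iteratedFDerivWithin_univ, iteratedFDerivWithin_univ] at h
  ext v
  calc iteratedFDeriv ℝ m (f ∘ e) θ v = iteratedFDeriv ℝ m f (c • θ) (fun i ↦ c • v i) :=
        DFunLike.congr_fun h v
    _ = (c ^ m • iteratedFDeriv ℝ m f (c • θ)) v := by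
        simp [ContinuousMultilinearMap.map_smul_univ]

/-- The constants in the symbol estimates of a product, by Leibniz' rule, in terms of those of the
factors. -/
noncomputable def leibnizConst (A B : ℕ → ℝ) (m : ℕ) : ℝ :=
  ∑ i ∈ Finset.range (m + 1), m.choose i * (A i * B (m - i))

/-- Symbol estimates of Hörmander–Mikhlin type of order `s`: off the origin `f` is smooth and its
`m`-th derivative is at most `A m * ‖θ‖ ^ (s - m)`. The constants are part of the data because
estimates have to be uniform over all `f` obeying them; derivatives are total derivatives, which
encodes the bounds over all multi-indices of length `m`. -/
structure IsMikhlinSymbol (s : ℝ) (A : ℕ → ℝ) (f : E → F) : Prop where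
  contDiffAt : ∀ ⦃θ : E⦄, θ ≠ 0 → ContDiffAt ℝ ∞ f θ
  norm_iteratedFDeriv_le : ∀ (m : ℕ) ⦃θ : E⦄, θ ≠ 0 →
    ‖iteratedFDeriv ℝ m f θ‖ ≤ A m * ‖θ‖ ^ (s - m)

namespace IsMikhlinSymbol

lemma contDiffOn (hf : IsMikhlinSymbol s A f) : ContDiffOn ℝ ∞ f {0}ᶜ :=
  fun _ hθ ↦ (hf.contDiffAt hθ).contDiffWithinAt

lemma norm_le (hf : IsMikhlinSymbol s A f) {θ : E} (hθ : θ ≠ 0) : ‖f θ‖ ≤ A 0 * ‖θ‖ ^ s := by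
  simpa using hf.norm_iteratedFDeriv_le 0 hθ

lemma const (c : F) : IsMikhlinSymbol 0 (fun _ ↦ ‖c‖) (fun _ : E ↦ c) where
  contDiffAt _ _ := contDiffAt_const
  norm_iteratedFDeriv_le m θ hθ := by
    rcases eq_or_ne m 0 with rfl | hm
    · simp
    · rw [iteratedFDeriv_const_of_ne hm, Pi.zero_apply, norm_zero]
      positivity

lemma sub (hf : IsMikhlinSymbol s A f) (hg : IsMikhlinSymbol s B g) :
    IsMikhlinSymbol s (fun m ↦ A m + B m) (fun θ ↦ f θ - g θ) where
  contDiffAt _ hθ := (hf.contDiffAt hθ).sub (hg.contDiffAt hθ)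
  norm_iteratedFDeriv_le m θ hθ := by
    rw [fun_iteratedFDeriv_sub_apply ((hf.contDiffAt hθ).of_le (mod_cast le_top))
      ((hg.contDiffAt hθ).of_le (mod_cast le_top)), add_mul]
    exact (norm_sub_le _ _).trans
      (add_le_add (hf.norm_iteratedFDeriv_le m hθ) (hg.norm_iteratedFDeriv_le m hθ))

lemma smul {χ : E → ℝ} (hχ : IsMikhlinSymbol s A χ) (hf : IsMikhlinSymbol t B f) :
    IsMikhlinSymbol (s + t) (leibnizConst A B) (fun θ ↦ χ θ • f θ) where
  contDiffAt _ hθ := (hχ.contDiffAt hθ).smul (hf.contDiffAt hθ)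
  norm_iteratedFDeriv_le m θ hθ := by
    have hopen : IsOpen ({0}ᶜ : Set E) := isOpen_compl_singleton
    have leibniz := norm_iteratedFDerivWithin_smul_le hχ.contDiffOn hf.contDiffOn
      hopen.uniqueDiffOn hθ (n := m) (mod_cast le_top)
    simp only [iteratedFDerivWithin_of_isOpen _ hopen hθ] at leibniz
    refine leibniz.trans ?_
    rw [leibnizConst, Finset.sum_mul]
    refine Finset.sum_le_sum fun i hi ↦ ?_
    have him : i ≤ m := Finset.mem_range_succ_iff.1 hi
    have hpow : ‖θ‖ ^ (s + t - m) = ‖θ‖ ^ (s - i) * ‖θ‖ ^ (t - (m - i : ℕ)) := by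
      rw [← Real.rpow_add (norm_pos_iff.2 hθ), Nat.cast_sub him]
      congr 1
      ring
    have hi := hχ.norm_iteratedFDeriv_le i hθ
    calc m.choose i * ‖iteratedFDeriv ℝ i χ θ‖ * ‖iteratedFDeriv ℝ (m - i) f θ‖
        ≤ m.choose i * (A i * ‖θ‖ ^ (s - i)) * (B (m - i) * ‖θ‖ ^ (t - (m - i : ℕ))) := by
          have := (norm_nonneg _).trans hi
          gcongr
          exact hf.norm_iteratedFDeriv_le (m - i) hθ
      _ = m.choose i * (A i * B (m - i)) * ‖θ‖ ^ (s + t - m) := by rw [hpow]; ring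

lemma dilate (hf : IsMikhlinSymbol s A f) {c : ℝ} (hc : c ≠ 0) :
    IsMikhlinSymbol s A (fun θ ↦ |c| ^ (-s) • f (c • θ)) where
  contDiffAt θ hθ :=
    ((hf.contDiffAt (smul_ne_zero hc hθ)).comp θ (contDiff_const_smul c).contDiffAt).const_smul _
  norm_iteratedFDeriv_le m θ hθ := by
    have hcθ : c • θ ≠ 0 := smul_ne_zero hc hθ
    have hc' : 0 < |c| := abs_pos.2 hc
    have hsmooth : ContDiffAt ℝ m (fun θ ↦ f (c • θ)) θ :=
      ((hf.contDiffAt hcθ).comp θ (contDiff_const_smul c).contDiffAt).of_le (mod_cast le_top)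
    rw [iteratedFDeriv_const_smul_apply' hsmooth, iteratedFDeriv_comp_smul_apply hc, norm_smul,
      norm_smul, norm_pow, Real.norm_eq_abs, Real.norm_eq_abs, abs_of_pos (by positivity)]
    calc |c| ^ (-s) * (|c| ^ m * ‖iteratedFDeriv ℝ m f (c • θ)‖)
        ≤ |c| ^ (-s) * (|c| ^ m * (A m * ‖c • θ‖ ^ (s - m))) := by
          gcongr
          exact hf.norm_iteratedFDeriv_le m hcθ
      _ = A m * ‖θ‖ ^ (s - m) := by
          rw [norm_smul, Real.norm_eq_abs, Real.mul_rpow hc'.le (norm_nonneg θ),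
            Real.rpow_sub hc', Real.rpow_neg hc'.le, Real.rpow_natCast]
          field_simp

lemma contDiff (hf : IsMikhlinSymbol s A f) (h0 : 0 ∉ tsupport f) : ContDiff ℝ ∞ f := by
  refine contDiff_iff_contDiffAt.2 fun θ ↦ ?_
  rcases eq_or_ne θ 0 with rfl | hθ
  · exact contDiffAt_const.congr_of_eventuallyEq (notMem_tsupport_iff_eventuallyEq.1 h0)
  · exact hf.contDiffAt hθ

end IsMikhlinSymbol

lemma exists_isMikhlinSymbol_of_hasCompactSupport (hf : ContDiff ℝ ∞ f)
    (hsupp : HasCompactSupport f) : ∃ A, IsMikhlinSymbol 0 A f := by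
  choose A hA using fun m ↦ (hsupp.toSchwartzMap hf).decay' m m
  refine ⟨A, fun θ _ ↦ hf.contDiffAt, fun m θ hθ ↦ ?_⟩
  rw [zero_sub, Real.rpow_neg (norm_nonneg θ), Real.rpow_natCast, ← div_eq_mul_inv,
    le_div_iff₀' (pow_pos (norm_pos_iff.2 hθ) m)]
  exact hA m θ

lemma IsMikhlinSymbol.of_norm_iteratedFDeriv_le_jap {k : ℕ} {f : EuclideanSpace ℝ (Fin k) → F}
    (hs : s ≤ 0) (hf : ContDiff ℝ ∞ f)
    (hA : ∀ m θ, ‖iteratedFDeriv ℝ m f θ‖ ≤ A m * jap θ ^ (s - m)) : IsMikhlinSymbol s A f where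
  contDiffAt _ _ := hf.contDiffAt
  norm_iteratedFDeriv_le m θ hθ := by
    have hjap : ‖θ‖ ≤ jap θ := Real.le_sqrt_of_sq_le (by linarith)
    have hθ' : 0 < ‖θ‖ := norm_pos_iff.2 hθ
    have hAm : 0 ≤ A m := nonneg_of_mul_nonneg_left ((norm_nonneg _).trans (hA m θ))
      (Real.rpow_pos_of_pos (hθ'.trans_le hjap) _)
    refine (hA m θ).trans (mul_le_mul_of_nonneg_left ?_ hAm)
    exact Real.rpow_le_rpow_of_nonpos hθ' hjap (sub_nonpos.2 (hs.trans m.cast_nonneg))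

end SymbolCalculus

section PowerIntegrability

variable {E : Type*} [NormedAddCommGroup E] [NormedSpace ℝ E] [FiniteDimensional ℝ E]
  [MeasurableSpace E] [BorelSpace E] {μ : Measure E} [μ.IsAddHaarMeasure] {s : ℝ}

lemma integrableOn_ball_norm_rpow [Nontrivial E] (hs : -(finrank ℝ E : ℝ) < s) (R : ℝ) :
    IntegrableOn (fun θ : E ↦ ‖θ‖ ^ s) (ball 0 R) μ := by
  refine integrableOn_ball_of_norm_le_rpow (C := 1) (α := -s) finrank_pos (by linarith)
    (.of_forall fun θ ↦ ?_) (Measurable.aestronglyMeasurable (by fun_prop))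
  rw [neg_neg, one_mul, Real.norm_of_nonneg (by positivity)]

lemma integrableOn_compl_ball_norm_rpow (hs : s < -(finrank ℝ E : ℝ)) {R : ℝ} (hR : 0 < R) :
    IntegrableOn (fun θ : E ↦ ‖θ‖ ^ s) (ball 0 R)ᶜ μ := by
  have hdom : Integrable (fun θ : E ↦ (R⁻¹ + 1) ^ (-s) * (1 + ‖θ‖) ^ s) μ := by
    simpa using (integrable_one_add_norm (r := -s) (lt_neg_of_lt_neg hs)).const_mul _
  refine hdom.integrableOn.mono' (Measurable.aestronglyMeasurable (by fun_prop))
    (ae_restrict_of_forall_mem measurableSet_ball.compl fun θ hθ ↦ ?_)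
  have hRθ : R ≤ ‖θ‖ := by simpa using hθ
  have hθ0 : 0 < ‖θ‖ := hR.trans_le hRθ
  have hs0 : s ≤ 0 := hs.le.trans (neg_nonpos.2 (Nat.cast_nonneg _))
  have hle : 1 + ‖θ‖ ≤ (R⁻¹ + 1) * ‖θ‖ := by
    have : 1 ≤ R⁻¹ * ‖θ‖ := (one_le_inv_mul₀ hR).2 hRθ
    linarith
  rw [Real.norm_of_nonneg (by positivity)]
  calc ‖θ‖ ^ s = (R⁻¹ + 1) ^ (-s) * ((R⁻¹ + 1) * ‖θ‖) ^ s := by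
        rw [Real.mul_rpow (by positivity) hθ0.le, ← mul_assoc, ← Real.rpow_add (by positivity)]
        simp
    _ ≤ (R⁻¹ + 1) ^ (-s) * (1 + ‖θ‖) ^ s := by
        gcongr ?_ * ?_
        exact Real.rpow_le_rpow_of_nonpos (by positivity) hle hs0

end PowerIntegrability

section Fourier

variable {E F : Type*} [NormedAddCommGroup E] [InnerProductSpace ℝ E] [FiniteDimensional ℝ E]
  [MeasurableSpace E] [BorelSpace E] [NormedAddCommGroup F] [NormedSpace ℂ F] {f g : E → F}

lemma norm_fourier_le_integral_norm (f : E → F) (w : E) : ‖𝓕 f w‖ ≤ ∫ θ, ‖f θ‖ :=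
  VectorFourier.norm_fourierIntegral_le_integral_norm _ _ _ f w

lemma fourier_add_apply (hf : Integrable f) (hg : Integrable g) (w : E) :
    𝓕 (f + g) w = 𝓕 f w + 𝓕 g w :=
  congrFun (VectorFourier.fourierIntegral_add Real.continuous_fourierChar
    (L := innerₗ E) continuous_inner hf hg) w

lemma fourier_const_smul (f : E → F) (r : ℝ) (w : E) : 𝓕 (fun θ ↦ r • f θ) w = r • 𝓕 f w :=
  congrFun (VectorFourier.fourierIntegral_const_smul _ _ _ f (r : ℂ)) w

lemma fourier_comp_smul (f : E → F) {c : ℝ} (hc : c ≠ 0) (w : E) :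
    𝓕 (fun θ ↦ f (c • θ)) w = (|c| ^ finrank ℝ E)⁻¹ • 𝓕 f (c⁻¹ • w) := by
  have h := Measure.integral_comp_smul volume
    (fun θ ↦ Real.fourierChar (-⟪θ, c⁻¹ • w⟫) • f θ) c
  simpa [Real.fourier_eq, real_inner_smul_left, real_inner_smul_right, hc, abs_inv, abs_pow]
    using h

lemma fourier_eq_integral_exp_inner (f : E → F) (ξ : E) :
    𝓕 f (-(2 * π)⁻¹ • ξ) = ∫ θ, Complex.exp (Complex.I * (⟪ξ, θ⟫ : ℂ)) • f θ := by
  rw [Real.fourier_eq']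
  congr! 4 with θ
  rw [real_inner_smul_right, real_inner_comm]
  push_cast
  field_simp

lemma pow_norm_mul_norm_fourier_le {N : ℕ} (hf : ContDiff ℝ N f)
    (hint : ∀ m ≤ N, Integrable (iteratedFDeriv ℝ m f)) (w : E) :
    (2 * π * ‖w‖) ^ N * ‖𝓕 f w‖ ≤ ∫ θ, ‖iteratedFDeriv ℝ N f θ‖ := by
  let u := ‖w‖⁻¹ • w
  have hu : ‖u‖ ≤ 1 := by
    rw [norm_smul, norm_inv, norm_norm]
    exact inv_mul_le_one
  have hwu : (-innerSL ℝ : E →L[ℝ] E →L[ℝ] ℝ) w u = -‖w‖ := by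
    calc _ = -⟪w, u⟫ := rfl
      _ = -‖w‖ := by
        rw [real_inner_smul_right, real_inner_self_eq_norm_mul_norm, ← mul_assoc,
          inv_mul_mul_self]
  have hfourier : 𝓕 (iteratedFDeriv ℝ N f) w =
      VectorFourier.fourierPowSMulRight (-innerSL ℝ) (𝓕 f) w N :=
    congrFun (Real.fourier_iteratedFDeriv (N := N) (mod_cast hf)
      (fun m hm ↦ hint m (mod_cast hm)) le_rfl) w
  have heval : ‖𝓕 (iteratedFDeriv ℝ N f) w (fun _ ↦ u)‖ = (2 * π * ‖w‖) ^ N * ‖𝓕 f w‖ := by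
    simp only [hfourier, VectorFourier.fourierPowSMulRight_apply, hwu, Finset.prod_const]
    simp [norm_smul, abs_of_pos Real.pi_pos, mul_pow, mul_assoc]
  calc (2 * π * ‖w‖) ^ N * ‖𝓕 f w‖ ≤ ‖𝓕 (iteratedFDeriv ℝ N f) w‖ :=
        heval ▸ ContinuousMultilinearMap.unit_le_opNorm _
          ((pi_norm_le_iff_of_nonneg zero_le_one).2 fun _ ↦ hu)
    _ ≤ ∫ θ, ‖iteratedFDeriv ℝ N f θ‖ := norm_fourier_le_integral_norm _ w

end Fourier

section SymbolIntegrability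

variable {E F : Type*} [NormedAddCommGroup E] [NormedSpace ℝ E] [MeasurableSpace E]
  [NormedAddCommGroup F] [NormedSpace ℝ F] {μ : Measure E} [NullSingletonClass μ] {s : ℝ}
  {A : ℕ → ℝ} {f : E → F} {S : Set E}

namespace IsMikhlinSymbol

lemma integral_norm_iteratedFDeriv_le (hf : IsMikhlinSymbol s A f) {m : ℕ}
    (hS : IntegrableOn (fun θ ↦ ‖θ‖ ^ (s - m)) S μ) (hsupp : support (iteratedFDeriv ℝ m f) ⊆ S) :
    ∫ θ, ‖iteratedFDeriv ℝ m f θ‖ ∂μ ≤ A m * ∫ θ in S, ‖θ‖ ^ (s - m) ∂μ := by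
  rw [← setIntegral_eq_integral_of_forall_compl_eq_zero
    (fun θ hθ ↦ norm_eq_zero.2 (notMem_support.1 (mt (@hsupp θ) hθ))), ← integral_const_mul]
  refine integral_mono_of_nonneg (.of_forall fun _ ↦ norm_nonneg _) (hS.const_mul _)
    (ae_restrict_of_ae ?_)
  filter_upwards [Measure.ae_ne μ 0] with θ hθ using hf.norm_iteratedFDeriv_le m hθ

variable [SecondCountableTopology E] [OpensMeasurableSpace E]

lemma integrable_of_support_subset (hf : IsMikhlinSymbol s A f)
    (hS : IntegrableOn (fun θ ↦ ‖θ‖ ^ s) S μ) (hsupp : support f ⊆ S) : Integrable f μ := by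
  have hmeas : AEStronglyMeasurable f μ := by
    rw [← restrict_compl_singleton (μ := μ) 0]
    exact hf.contDiffOn.continuousOn.aestronglyMeasurable (measurableSet_singleton 0).compl
  rw [← integrableOn_iff_integrable_of_support_subset hsupp]
  refine (hS.const_mul (A 0)).mono' hmeas.restrict (ae_restrict_of_ae ?_)
  filter_upwards [Measure.ae_ne μ 0] with θ hθ using hf.norm_le hθ

end IsMikhlinSymbol

end SymbolIntegrability

section FourierDecay

variable {E F : Type*} [NormedAddCommGroup E] [InnerProductSpace ℝ E] [FiniteDimensional ℝ E]
  [MeasurableSpace E] [BorelSpace E] [NormedAddCommGroup F] [NormedSpace ℂ F]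
  {s : ℝ} {A : ℕ → ℝ} {f : E → F}

namespace IsMikhlinSymbol

variable [Nontrivial E]

lemma norm_fourier_le_of_support_subset_ball (hf : IsMikhlinSymbol s A f)
    (hs : -(finrank ℝ E : ℝ) < s) {R : ℝ} (hsupp : support f ⊆ ball 0 R) (w : E) :
    ‖𝓕 f w‖ ≤ A 0 * ∫ θ : E in ball 0 R, ‖θ‖ ^ s := by
  refine (norm_fourier_le_integral_norm f w).trans ?_
  simpa using hf.integral_norm_iteratedFDeriv_le (μ := volume) (m := 0) (S := ball 0 R)
    (by simpa using integrableOn_ball_norm_rpow hs R)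
    (fun θ hθ ↦ hsupp fun h ↦ hθ (norm_eq_zero.1 (by simp [h])))

lemma norm_fourier_le_of_tsupport_subset_compl_ball (hf : IsMikhlinSymbol s A f)
    (hcomp : HasCompactSupport f) {N : ℕ} (hN : s - N < -(finrank ℝ E : ℝ)) {r : ℝ} (hr : 0 < r)
    (hsupp : tsupport f ⊆ (ball 0 r)ᶜ) (w : E) :
    (2 * π * ‖w‖) ^ N * ‖𝓕 f w‖ ≤ A N * ∫ θ : E in (ball 0 r)ᶜ, ‖θ‖ ^ (s - N) := by
  have hsmooth : ContDiff ℝ ∞ f := hf.contDiff fun h0 ↦ hsupp h0 (mem_ball_self hr)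
  have hint (m : ℕ) : Integrable (iteratedFDeriv ℝ m f) :=
    (hsmooth.continuous_iteratedFDeriv (mod_cast le_top)).integrable_of_hasCompactSupport
      (hcomp.iteratedFDeriv m)
  calc (2 * π * ‖w‖) ^ N * ‖𝓕 f w‖ ≤ ∫ θ, ‖iteratedFDeriv ℝ N f θ‖ :=
        pow_norm_mul_norm_fourier_le (hsmooth.of_le (mod_cast le_top)) (fun m _ ↦ hint m) w
    _ ≤ A N * ∫ θ : E in (ball 0 r)ᶜ, ‖θ‖ ^ (s - N) :=
        hf.integral_norm_iteratedFDeriv_le (integrableOn_compl_ball_norm_rpow hN hr)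
          ((support_iteratedFDeriv_subset N).trans hsupp)

end IsMikhlinSymbol

lemma exists_forall_norm_fourier_le_of_norm_eq_one [Nontrivial E] (hs : -(finrank ℝ E : ℝ) < s)
    (A : ℕ → ℝ) :
    ∃ K, ∀ f : E → F, IsMikhlinSymbol s A f → HasCompactSupport f → ∀ w, ‖w‖ = 1 → ‖𝓕 f w‖ ≤ K := by
  let ρ : ContDiffBump (0 : E) := ⟨1, 2, one_pos, one_lt_two⟩
  obtain ⟨P, hρ⟩ := exists_isMikhlinSymbol_of_hasCompactSupport ρ.contDiff ρ.hasCompactSupport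
  obtain ⟨N, hN⟩ := exists_nat_gt (s + finrank ℝ E)
  refine ⟨leibnizConst P A 0 * (∫ θ : E in ball 0 2, ‖θ‖ ^ s) +
    leibnizConst (fun m ↦ ‖(1 : ℝ)‖ + P m) A N * ∫ θ : E in (ball 0 1)ᶜ, ‖θ‖ ^ (s - N),
    fun f hf hcomp w hw ↦ ?_⟩
  let near : E → F := fun θ ↦ ρ θ • f θ
  let far : E → F := fun θ ↦ (1 - ρ θ) • f θ
  have hnear : IsMikhlinSymbol s (leibnizConst P A) near := zero_add s ▸ hρ.smul hf
  have hfar : IsMikhlinSymbol s (leibnizConst _ A) far :=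
    zero_add s ▸ ((IsMikhlinSymbol.const (1 : ℝ)).sub hρ).smul hf
  have hnear_supp : support near ⊆ ball 0 2 :=
    (support_smul_subset_left ρ f).trans ρ.support_eq.subset
  have hfar_supp : tsupport far ⊆ (ball 0 1)ᶜ :=
    closure_minimal (fun θ hθ h ↦ hθ <| by
      simp [far, ρ.one_of_mem_closedBall (ball_subset_closedBall h)]) isOpen_ball.isClosed_compl
  have hfar_comp : HasCompactSupport far := hcomp.smul_left
  have hnear_int : Integrable near :=
    hnear.integrable_of_support_subset (integrableOn_ball_norm_rpow hs 2) hnear_supp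
  have hfar_int : Integrable far :=
    (hfar.contDiff fun h0 ↦ hfar_supp h0 (mem_ball_self one_pos)).continuous
      |>.integrable_of_hasCompactSupport hfar_comp
  have hsplit : f = near + far := by
    ext θ
    simp [near, far, sub_smul]
  have hfar_le := hfar.norm_fourier_le_of_tsupport_subset_compl_ball hfar_comp
    (by linarith) one_pos hfar_supp w
  rw [hsplit, fourier_add_apply hnear_int hfar_int]
  refine (norm_add_le _ _).trans (add_le_add ?_ ?_)
  · exact hnear.norm_fourier_le_of_support_subset_ball hs hnear_supp w
  · refine (le_mul_of_one_le_left (norm_nonneg _) ?_).trans hfar_le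
    rw [hw, mul_one]
    exact one_le_pow₀ (by linarith [Real.two_le_pi])

lemma exists_forall_norm_fourier_le_norm_rpow (hs : -(finrank ℝ E : ℝ) < s) (A : ℕ → ℝ) :
    ∃ K, ∀ f : E → F, IsMikhlinSymbol s A f → HasCompactSupport f → ∀ w, w ≠ 0 →
      ‖𝓕 f w‖ ≤ K * ‖w‖ ^ (-(finrank ℝ E : ℝ) - s) := by
  rcases subsingleton_or_nontrivial E with _ | _
  · exact ⟨0, fun _ _ _ w hw ↦ (hw (Subsingleton.elim w 0)).elim⟩
  obtain ⟨K, hK⟩ := exists_forall_norm_fourier_le_of_norm_eq_one (F := F) hs A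
  refine ⟨K, fun f hf hcomp w hw ↦ ?_⟩
  have hw' : 0 < ‖w‖ := norm_pos_iff.2 hw
  have hc : ‖w‖⁻¹ ≠ 0 := inv_ne_zero hw'.ne'
  have hscale : 𝓕 (fun θ ↦ |‖w‖⁻¹| ^ (-s) • f (‖w‖⁻¹ • θ)) (‖w‖⁻¹ • w) =
      ‖w‖ ^ ((finrank ℝ E : ℝ) + s) • 𝓕 f w := by
    rw [fourier_const_smul, fourier_comp_smul f hc, inv_smul_smul₀ hc, smul_smul, abs_inv,
      abs_norm, Real.inv_rpow hw'.le, ← Real.rpow_neg hw'.le, neg_neg, inv_pow, inv_inv,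
      ← Real.rpow_natCast, ← Real.rpow_add hw', add_comm]
  have hle : ‖w‖ ^ ((finrank ℝ E : ℝ) + s) * ‖𝓕 f w‖ ≤ K := by
    have hunit : ‖‖w‖⁻¹ • w‖ = 1 := norm_smul_inv_norm (𝕜 := ℝ) hw
    have h := hK _ (hf.dilate hc) (hcomp.comp_smul hc).smul_left _ hunit
    rwa [hscale, norm_smul, Real.norm_of_nonneg (by positivity)] at h
  rwa [← neg_add', Real.rpow_neg hw'.le, ← div_eq_mul_inv, le_div_iff₀' (by positivity)]

theorem stmt9_general {μ : ℝ} (hμ : -(finrank ℝ E : ℝ) < μ) (A : ℕ → ℝ) {χ : E → ℝ}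
    (hχ : ContDiff ℝ ∞ χ) (hχ_supp : HasCompactSupport χ) :
    ∃ C, ∀ a : E → F, IsMikhlinSymbol μ A a → ∀ (ξ : E) (ε : ℝ), ξ ≠ 0 → ε ≠ 0 →
      ‖∫ θ, Complex.exp (Complex.I * (⟪ξ, θ⟫ : ℂ)) • χ (ε • θ) • a θ‖ ≤
        C * ‖ξ‖ ^ (-(finrank ℝ E : ℝ) - μ) := by
  obtain ⟨B, hB⟩ := exists_isMikhlinSymbol_of_hasCompactSupport hχ hχ_supp
  obtain ⟨K, hK⟩ := exists_forall_norm_fourier_le_norm_rpow (F := F) hμ (leibnizConst B A)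
  refine ⟨K * (2 * π)⁻¹ ^ (-(finrank ℝ E : ℝ) - μ), fun a ha ξ ε hξ hε ↦ ?_⟩
  have hχε : IsMikhlinSymbol 0 B fun θ ↦ χ (ε • θ) := by simpa using hB.dilate hε
  have hsymbol : IsMikhlinSymbol μ (leibnizConst B A) fun θ ↦ χ (ε • θ) • a θ :=
    zero_add μ ▸ hχε.smul ha
  have hw : -(2 * π)⁻¹ • ξ ≠ 0 := smul_ne_zero (by simp [Real.pi_ne_zero]) hξ
  have hnorm : ‖-(2 * π)⁻¹ • ξ‖ = (2 * π)⁻¹ * ‖ξ‖ := by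
    rw [norm_smul, norm_neg, Real.norm_of_nonneg (by positivity)]
  rw [← fourier_eq_integral_exp_inner, mul_assoc, ← Real.mul_rpow (by positivity) (norm_nonneg ξ),
    ← hnorm]
  exact hK _ hsymbol (hχ_supp.comp_smul hε).smul_right _ hw

end FourierDecay

/-- Blow-up rate of a conormal distribution of order `−k < μ < 0`:
the regularized oscillatory integrals are `O(|x′|^{−k−μ})` uniformly in `ε`. -/
theorem stmt9 (n k : ℕ) (hk : 1 ≤ k) (hkn : k ≤ n) (μ : ℝ)
    (hμ₁ : -(k : ℝ) < μ) (hμ₂ : μ < 0)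
    (a : EuclideanSpace ℝ (Fin k) → EuclideanSpace ℝ (Fin (n - k)) →
      EuclideanSpace ℝ (Fin k) → ℂ)
    (ha_smooth : ContDiff ℝ (⊤ : ℕ∞)
      (fun p : EuclideanSpace ℝ (Fin k) × EuclideanSpace ℝ (Fin (n - k)) ×
          EuclideanSpace ℝ (Fin k) => a p.1 p.2.1 p.2.2))
    (ha : ∀ mα : ℕ, ∃ C : ℝ, ∀ x' x'' θ,
      ‖iteratedFDeriv ℝ mα (fun θ => a x' x'' θ) θ‖ ≤ C * jap θ ^ (μ - (mα : ℝ)))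
    (χ : EuclideanSpace ℝ (Fin k) → ℝ)
    (hχ_smooth : ContDiff ℝ (⊤ : ℕ∞) χ) (hχ_supp : HasCompactSupport χ)
    (hχ_one : ∀ᶠ θ in nhds 0, χ θ = 1) :
    ∃ C : ℝ, ∀ (x' : EuclideanSpace ℝ (Fin k)) (x'' : EuclideanSpace ℝ (Fin (n - k)))
      (ε : ℝ), 0 < ‖x'‖ → ‖x'‖ ≤ 1 → 0 < ε → ε ≤ 1 →
      ‖∫ θ : EuclideanSpace ℝ (Fin k),
          Complex.exp (Complex.I * (⟪x', θ⟫ : ℂ)) * a x' x'' θ * (χ (ε • θ) : ℂ)‖ ≤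
        C * ‖x'‖ ^ (-(k : ℝ) - μ) := by
  choose A hA using ha
  have hsymbol (x' x'') : IsMikhlinSymbol μ A (a x' x'') :=
    .of_norm_iteratedFDeriv_le_jap hμ₂.le
      (ha_smooth.comp ((contDiff_prodMk_right x').comp (contDiff_prodMk_right x'')))
      fun m ↦ hA m x' x''
  obtain ⟨C, hC⟩ := stmt9_general (F := ℂ) (by simpa using hμ₁) A hχ_smooth hχ_supp
  refine ⟨C, fun x' x'' ε hx' _ hε _ ↦ ?_⟩
  simpa [mul_assoc, mul_comm (a _ _ _)] using hC _ (hsymbol x' x'') x' ε (norm_pos_iff.1 hx') hε.ne'
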